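/- arXiv:1706.03840 — 3 statements merged into one kernel-verified Lean document; each statement's English description precedes it below -/
import Mathlib

section
/- Let 0 < μ ≤ d/2. Then for every t ∈ ℝ and every u ∈ ℝ^{n-1-d}, ∫_{ℝ^d} ( cosh t + ((|u|² + |w|²)/2) e^t )^{-μ} dw = +∞. Consequently, the function f(x) = x_{n+1}^{-μ}, which is continuous on H^n and satisfies f(x) = O(x_{n+1}^{-μ}), has d-horospherical transform \hat f(a_t n_u ξ_0) = ∫_{ℝ^d} f(a_t n_{u+w} x_0) dw identically equal to +∞; hence the condition μ > d/2 in the existence theorem for \hat f on C_μ(H^n) is sharp. -/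
/-!
The last coordinate of `a_t n_v x₀` is `cosh t + (|v|²/2) eᵗ`, and `|u + w|² = |u|² + |w|²` for
vectors supported on complementary blocks of coordinates, so the two integrands coincide and both
have the form `(A + B |w|²)^{-μ}` with `A > 0` and `B ≥ 0`.

`Fin d → ℝ` carries the sup norm, for which `|w|² ≤ d ‖w‖²`. As `μ > 0`, the integrand dominates the
radial function `f(‖w‖)` with `f(r) = (A + B d r²)^{-μ}`. In polar coordinates, integrability of
`f(‖w‖)` amounts to that of `r^{d-1} f(r)` on `(0, ∞)`. For `r ≥ 1` the latter is at least a positive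
constant times `r^{d-1-2μ}`, and `d - 1 - 2μ ≥ -1`, so it is not integrable at infinity.
-/

open MeasureTheory Real Set
open scoped ENNReal

noncomputable section

/-- The pseudo-Euclidean bilinear form `[x,y]` on `ℝ^{n+1}`. -/
def Lform {n : ℕ} (x y : Fin (n + 1) → ℝ) : ℝ :=
  x (Fin.last n) * y (Fin.last n) - ∑ i : Fin n, x i.castSucc * y i.castSucc

/-- The hyperboloid model `H^n`. -/
def Hyp (n : ℕ) : Set (Fin (n + 1) → ℝ) :=
  {x | Lform x x = 1 ∧ 0 < x (Fin.last n)}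

/-- The origin `x₀ = e_{n+1}` of `H^n`. -/
def origin (n : ℕ) : Fin (n + 1) → ℝ := fun i => if i = Fin.last n then 1 else 0

/-- Squared Euclidean norm of a vector. -/
def nsq {m : ℕ} (v : Fin m → ℝ) : ℝ := ∑ i, v i ^ 2

/-- The matrix `n_v`, `v ∈ ℝ^{n-1}`. -/
def nMat (n : ℕ) (v : Fin (n - 1) → ℝ) : Matrix (Fin (n + 1)) (Fin (n + 1)) ℝ :=
  Matrix.of fun i j =>
    if hi : (i : ℕ) < n - 1 then
      if hj : (j : ℕ) < n - 1 then (if (i : ℕ) = (j : ℕ) then 1 else 0)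
      else if (j : ℕ) = n - 1 then -v ⟨i, hi⟩
      else v ⟨i, hi⟩
    else if (i : ℕ) = n - 1 then
      if hj : (j : ℕ) < n - 1 then v ⟨j, hj⟩
      else if (j : ℕ) = n - 1 then 1 - nsq v / 2
      else nsq v / 2
    else
      if hj : (j : ℕ) < n - 1 then v ⟨j, hj⟩
      else if (j : ℕ) = n - 1 then -(nsq v / 2)
      else 1 + nsq v / 2

/-- The hyperbolic rotation `a_t` in the `(x_n, x_{n+1})` plane. -/
def aMat (n : ℕ) (t : ℝ) : Matrix (Fin (n + 1)) (Fin (n + 1)) ℝ :=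
  Matrix.of fun i j =>
    if (i : ℕ) < n - 1 then (if (i : ℕ) = (j : ℕ) then 1 else 0)
    else if (i : ℕ) = n - 1 then
      (if (j : ℕ) = n - 1 then Real.cosh t else if (j : ℕ) = n then Real.sinh t else 0)
    else
      (if (j : ℕ) = n - 1 then Real.sinh t else if (j : ℕ) = n then Real.cosh t else 0)

/-- Identification of `u ∈ ℝ^{n-1-d}` with `(u,0,…,0) ∈ ℝ^{n-1}`. -/
def embU (n d : ℕ) (u : Fin (n - 1 - d) → ℝ) : Fin (n - 1) → ℝ := fun i =>
  if h : (i : ℕ) < n - 1 - d then u ⟨i, h⟩ else 0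

/-- Identification of `w ∈ ℝ^d` with `(0,…,0,w) ∈ ℝ^{n-1}`. -/
def embW (n d : ℕ) (w : Fin d → ℝ) : Fin (n - 1) → ℝ := fun i =>
  if h : (i : ℕ) - (n - 1 - d) < d then
    (if n - 1 - d ≤ (i : ℕ) then w ⟨(i : ℕ) - (n - 1 - d), h⟩ else 0)
  else 0

/-- The embedding `k ↦ diag(k,1)` of `n×n` matrices into `(n+1)×(n+1)` matrices. -/
def embSO (n : ℕ) (k : Fin n → Fin n → ℝ) : Matrix (Fin (n + 1)) (Fin (n + 1)) ℝ :=
  Matrix.of fun i j =>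
    if hi : (i : ℕ) < n then (if hj : (j : ℕ) < n then k ⟨i, hi⟩ ⟨j, hj⟩ else 0)
    else (if (j : ℕ) < n then 0 else 1)

/-- The special orthogonal group `SO(n)` (as a set of `n×n` matrices). -/
def SOset (n : ℕ) : Set (Fin n → Fin n → ℝ) :=
  {k | Matrix.of k * Matrix.transpose (Matrix.of k) = 1 ∧ (Matrix.of k).det = 1}

/-- The group `G = SO₀(n,1)`: matrices preserving the form `[·,·]`, with `det = 1`
and positive lower-right entry. -/
def Gset (n : ℕ) : Set (Matrix (Fin (n + 1)) (Fin (n + 1)) ℝ) :=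
  {g | (∀ x y, Lform (g.mulVec x) (g.mulVec y) = Lform x y) ∧ g.det = 1 ∧
    0 < g (Fin.last n) (Fin.last n)}

/-- `μ` is the normalized Haar probability measure of `SO(n)`. -/
structure IsHaarSO (n : ℕ) (μ : Measure (Fin n → Fin n → ℝ)) : Prop where
  prob : IsProbabilityMeasure μ
  supported : μ (SOset n)ᶜ = 0
  invariant : ∀ k₀ ∈ SOset n,
    Measure.map (fun k => Matrix.of.symm (Matrix.of k₀ * Matrix.of k)) μ = μ

/-- Surface area `σ_m = 2 π^{(m+1)/2} / Γ((m+1)/2)` of the unit sphere `S^m`. -/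
def sphereArea (m : ℕ) : ℝ :=
  2 * Real.pi ^ (((m : ℝ) + 1) / 2) / Real.Gamma (((m : ℝ) + 1) / 2)

/-- The point `θ sinh r + e_{n+1} cosh r` of `H^n`. -/
def hypPoint (n : ℕ) (θ : EuclideanSpace ℝ (Fin n)) (r : ℝ) : Fin (n + 1) → ℝ := fun i =>
  if h : (i : ℕ) < n then Real.sinh r * θ ⟨i, h⟩ else Real.cosh r

/-- The invariant measure on `H^n`:
`∫ f d(hypMeasure n) = ∫_{S^{n-1}} ∫_0^∞ f(θ sinh r + e_{n+1} cosh r) sinh^{n-1} r dr dθ`. -/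
def hypMeasure (n : ℕ) : Measure (Fin (n + 1) → ℝ) :=
  Measure.map (fun p : Metric.sphere (0 : EuclideanSpace ℝ (Fin n)) 1 × ℝ => hypPoint n p.1 p.2)
    ((volume.toSphere).prod
      ((volume.restrict (Set.Ioi (0 : ℝ))).withDensity fun r => ENNReal.ofReal (Real.sinh r ^ (n - 1))))

/-- The Riemann–Liouville fractional integral `I₋^α` (for `[0,∞]`-valued functions). -/
def RLinf (α : ℝ) (f : ℝ → ℝ≥0∞) (r : ℝ) : ℝ≥0∞ :=
  ENNReal.ofReal ((Real.Gamma α)⁻¹) * ∫⁻ s in Set.Ioi r, f s * ENNReal.ofReal ((s - r) ^ (α - 1))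

/-- Inverse hyperbolic cosine. -/
def arcoshR (x : ℝ) : ℝ := Real.log (x + Real.sqrt (x ^ 2 - 1))

/-- The embedding `m ↦ diag(m, I₂)` of `(n-1)×(n-1)` matrices. -/
def embM (n : ℕ) (m : Fin (n - 1) → Fin (n - 1) → ℝ) : Matrix (Fin (n + 1)) (Fin (n + 1)) ℝ :=
  Matrix.of fun i j =>
    if hi : (i : ℕ) < n - 1 then (if hj : (j : ℕ) < n - 1 then m ⟨i, hi⟩ ⟨j, hj⟩ else 0)
    else (if (j : ℕ) < n - 1 then 0 else if (i : ℕ) = (j : ℕ) then 1 else 0)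

/-- The embedding `(α, β) ↦ diag(α, β, I₂)`. -/
def embMd (n d : ℕ) (a : Fin (n - 1 - d) → Fin (n - 1 - d) → ℝ) (b : Fin d → Fin d → ℝ) :
    Matrix (Fin (n + 1)) (Fin (n + 1)) ℝ :=
  Matrix.of fun i j =>
    if hi : (i : ℕ) < n - 1 - d then (if hj : (j : ℕ) < n - 1 - d then a ⟨i, hi⟩ ⟨j, hj⟩ else 0)
    else if (i : ℕ) < n - 1 then
      (if (j : ℕ) < n - 1 - d then 0
       else if (j : ℕ) < n - 1 then
         (if hi2 : (i : ℕ) - (n - 1 - d) < d then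
            (if hj2 : (j : ℕ) - (n - 1 - d) < d then
              b ⟨(i : ℕ) - (n - 1 - d), hi2⟩ ⟨(j : ℕ) - (n - 1 - d), hj2⟩ else 0)
          else 0)
       else 0)
    else (if (j : ℕ) < n - 1 then 0 else if (i : ℕ) = (j : ℕ) then 1 else 0)

lemma nsq_nonneg {m : ℕ} (v : Fin m → ℝ) : 0 ≤ nsq v :=
  Finset.sum_nonneg fun i _ => sq_nonneg (v i)

/-- Comparison of the Euclidean norm with the sup norm that `Fin d → ℝ` carries. -/
lemma nsq_le {d : ℕ} (w : Fin d → ℝ) : nsq w ≤ d * ‖w‖ ^ 2 := by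
  have h : ∀ i ∈ Finset.univ, w i ^ 2 ≤ ‖w‖ ^ 2 := fun i _ =>
    sq_le_sq.2 (by simpa using norm_le_pi_norm w i)
  simpa [nsq] using Finset.sum_le_sum h

/-- Radial divergence: the exponent `2μ` is at most the dimension `d`. -/
lemma not_integrable_radial {d : ℕ} (hd : 1 ≤ d) {μ A B : ℝ} (hμ0 : 0 < μ)
    (hμ : μ ≤ (d : ℝ) / 2) (hA : 0 < A) (hB : 0 ≤ B) :
    ¬ Integrable (fun w : Fin d → ℝ => (A + B * ‖w‖ ^ 2) ^ (-μ)) := by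
  have : Nonempty (Fin d) := ⟨⟨0, hd⟩⟩
  intro h
  have h1 := (integrable_fun_norm_addHaar (volume : Measure (Fin d → ℝ))
    (f := fun r => (A + B * r ^ 2) ^ (-μ))).1 h
  have h2 := h1.mono_set (Ioi_subset_Ioi zero_le_one)
  have h3 : IntegrableOn (fun r : ℝ => (A + B) ^ (-μ) * r ^ ((d : ℝ) - 1 - 2 * μ)) (Ioi 1) := by
    refine Integrable.mono' h2 (by fun_prop) ?_
    filter_upwards [ae_restrict_mem measurableSet_Ioi] with r hr
    have hr1 : 1 < r := hr
    have hr0 : 0 < r := by linarith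
    rw [Real.norm_of_nonneg (by positivity)]
    have e : (A + B) ^ (-μ) * r ^ ((d : ℝ) - 1 - 2 * μ)
        = r ^ (d - 1) * ((A + B) * r ^ 2) ^ (-μ) := by
      rw [Real.mul_rpow (by positivity) (by positivity), ← Real.rpow_natCast r 2,
        ← Real.rpow_mul hr0.le, ← Real.rpow_natCast r (d - 1), mul_left_comm, ← Real.rpow_add hr0]
      push_cast [hd]
      ring_nf
    rw [e, Module.finrank_fin_fun, smul_eq_mul]
    refine mul_le_mul_of_nonneg_left ?_ (by positivity)
    refine Real.rpow_le_rpow_of_nonpos (by positivity) ?_ (by linarith)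
    nlinarith [mul_pos hA (show 0 < r ^ 2 - 1 by nlinarith)]
  have h4 : IntegrableOn (fun r : ℝ => r ^ ((d : ℝ) - 1 - 2 * μ)) (Ioi 1) :=
    (integrable_const_mul_iff (IsUnit.mk0 _ (by positivity)) _).1 h3
  have := (integrableOn_Ioi_rpow_iff one_pos).1 h4
  linarith

lemma lintegral_eq_top_of_le {d : ℕ} (hd : 1 ≤ d) {μ A B : ℝ} (hμ0 : 0 < μ)
    (hμ : μ ≤ (d : ℝ) / 2) (hA : 0 < A) (hB : 0 ≤ B) :
    ∫⁻ w : Fin d → ℝ, ENNReal.ofReal ((A + B * nsq w) ^ (-μ)) = ⊤ := by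
  by_contra hne
  refine not_integrable_radial hd hμ0 hμ hA (B := B * d) (by positivity) ⟨?_, ?_⟩
  · exact Measurable.aestronglyMeasurable (by fun_prop)
  · rw [hasFiniteIntegral_iff_ofReal (Filter.Eventually.of_forall fun w => by positivity)]
    refine lt_of_le_of_lt (lintegral_mono fun w => ENNReal.ofReal_le_ofReal ?_)
      (lt_top_iff_ne_top.2 hne)
    have hw := nsq_nonneg w
    refine Real.rpow_le_rpow_of_nonpos (by positivity) ?_ (by linarith)
    rw [mul_assoc]
    gcongr
    exact nsq_le w

/-- Pythagoras for the complementary coordinate blocks of `u` and `w`. -/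
lemma nsq_emb_add {n d : ℕ} (hdn : d ≤ n - 1) (u : Fin (n - 1 - d) → ℝ) (w : Fin d → ℝ) :
    nsq (embU n d u + embW n d w) = nsq u + nsq w := by
  have hs : n - 1 - d + d = n - 1 := Nat.sub_add_cancel hdn
  unfold nsq
  rw [← (finCongr hs).sum_comp, Fin.sum_univ_add]
  congr 1
  · refine Finset.sum_congr rfl fun i _ => ?_
    have : ¬ n - 1 - d ≤ (i : ℕ) := by omega
    simp [embU, embW, this]
  · refine Finset.sum_congr rfl fun i _ => ?_
    simp [embU, embW]

lemma last_coord {n : ℕ} (hn : 2 ≤ n) (t : ℝ) (v : Fin (n - 1) → ℝ) :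
    (aMat n t * nMat n v).mulVec (origin n) (Fin.last n)
      = Real.cosh t + nsq v / 2 * Real.exp t := by
  obtain ⟨k, rfl⟩ : ∃ k, n = k + 1 := ⟨n - 1, by omega⟩
  have h : (aMat (k + 1) t * nMat (k + 1) v).mulVec (origin (k + 1)) (Fin.last (k + 1))
      = (aMat (k + 1) t * nMat (k + 1) v) (Fin.last (k + 1)) (Fin.last (k + 1)) := by
    simp [Matrix.mulVec, dotProduct, origin]
  rw [h, Matrix.mul_apply, Fin.sum_univ_castSucc, Fin.sum_univ_castSucc, Finset.sum_eq_zero]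
  · simp [aMat, nMat, ← Real.cosh_add_sinh]
    ring
  · intro i _
    have h1 : (i : ℕ) ≠ k := i.2.ne
    have h2 : (i : ℕ) ≠ k + 1 := by omega
    simp [aMat, h1, h2]

/-- sharpness of the condition `μ > d/2` for existence of the
`d`-horospherical transform on `C_μ(H^n)`. -/
theorem horospherical_transform_C_mu_sharp
    (n d : ℕ) (hn : 2 ≤ n) (hd1 : 1 ≤ d) (hdn : d ≤ n - 1)
    (μ : ℝ) (hμ0 : 0 < μ) (hμ : μ ≤ (d : ℝ) / 2) :
    ∀ (t : ℝ) (u : Fin (n - 1 - d) → ℝ),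
      (∫⁻ w : Fin d → ℝ,
          ENNReal.ofReal ((Real.cosh t + (nsq u + nsq w) / 2 * Real.exp t) ^ (-μ))) = ⊤ ∧
      (∫⁻ w : Fin d → ℝ,
          ENNReal.ofReal ((((aMat n t * nMat n (embU n d u + embW n d w)).mulVec
            (origin n)) (Fin.last n)) ^ (-μ))) = ⊤ := by
  intro t u
  have hu := nsq_nonneg u
  have hA : 0 < Real.cosh t + nsq u / 2 * Real.exp t := by
    have := Real.cosh_pos t
    positivity
  have key := lintegral_eq_top_of_le hd1 hμ0 hμ hA (B := Real.exp t / 2) (by positivity)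
  have e : ∀ w : Fin d → ℝ, Real.cosh t + nsq u / 2 * Real.exp t + Real.exp t / 2 * nsq w
      = Real.cosh t + (nsq u + nsq w) / 2 * Real.exp t := fun w => by ring
  simp only [e] at key
  simp only [last_coord hn, nsq_emb_add hdn]
  exact ⟨key, key⟩
end
end

section
/- Let f : H^n → [0,∞] be measurable and let k ∈ SO(n), embedded as diag(k,1). If d < n-1, then ∫_ℝ ∫_{ℝ^{n-1-d}} ( ∫_{ℝ^d} f(k a_t n_{u+w} x_0) dw ) du dt = ∫_{H^n} f(x) dx, and if d = n-1, then ∫_ℝ ( ∫_{ℝ^{n-1}} f(k a_t n_w x_0) dw ) dt = ∫_{H^n} f(x) dx, both as identities in [0,∞]. In particular, if f ∈ L^1(H^n), then the d-horospherical transform \hat f(k a_t n_u ξ_0) is finite for almost all t ∈ ℝ and almost all u ∈ ℝ^{n-1-d}, and integrating it in (t,u) recovers the total integral of f. -/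
/-!
Write points of `H^n` as graph points `(y, √(1 + |y|²))`, `y ∈ ℝ^n` (`hypLift`). In these coordinates
the invariant measure is `dy / √(1 + |y|²)`: this is polar integration `y = ρ θ` combined with the
substitution `ρ = sinh r` (`lintegral_hypMeasure`). A rotation `diag(k, 1)` acts on the coordinates
by `y ↦ k y`, which preserves Lebesgue measure and `|y|`, so the invariant measure is
`SO(n)`-invariant (`lintegral_hypMeasure_embSO`) and `k` may be removed from the claim.

A direct computation gives `a_t n_v x₀ = (v, sinh t + e^t |v|²/2, cosh t + e^t |v|²/2)`
(`aMat_nMat_origin`). For fixed `v`, the map `t ↦ y_n = sinh t + e^t |v|²/2` is an increasing bijection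
of `ℝ` whose derivative `cosh t + e^t |v|²/2` is exactly `√(1 + |v|² + y_n²)`, so `dt` corresponds to
`dy_n / √(1 + |y|²)` (`lintegral_horo`). By Tonelli, `dt dv` is the invariant measure
(`lintegral_horospherical`). This is the case `d = n - 1`; for `d < n - 1` the integral over `v` is
split as `v = u + w` (`lintegral_embU_add_embW`).
-/

open MeasureTheory Real Set
open scoped ENNReal

noncomputable section

/-! ### The hyperboloid as a graph over `ℝ^n` -/

/-- The graph parametrisation `y ↦ (y, √(1 + |y|²))` of the hyperboloid over `ℝ^n`. -/
def hypLift (n : ℕ) (y : Fin n → ℝ) : Fin (n + 1) → ℝ := fun i =>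
  if h : (i : ℕ) < n then y ⟨i, h⟩ else √(1 + nsq y)

lemma nsq_nonneg_s3 {n : ℕ} (y : Fin n → ℝ) : 0 ≤ nsq y :=
  Finset.sum_nonneg fun _ _ => sq_nonneg _

lemma measurable_nsq {n : ℕ} : Measurable (nsq : (Fin n → ℝ) → ℝ) := by
  unfold nsq; fun_prop

lemma measurable_hypLift (n : ℕ) : Measurable (hypLift n) := by
  rw [measurable_pi_iff]
  intro i
  unfold hypLift
  have := measurable_nsq (n := n)
  split_ifs <;> fun_prop

lemma mulVec_origin {n : ℕ} (M : Matrix (Fin (n + 1)) (Fin (n + 1)) ℝ) (i : Fin (n + 1)) :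
    M.mulVec (origin n) i = M i (Fin.last n) := by
  simp [Matrix.mulVec, dotProduct, origin]

lemma nsq_snoc {m : ℕ} (v : Fin m → ℝ) (y : ℝ) :
    nsq (Fin.snoc v y : Fin (m + 1) → ℝ) = nsq v + y ^ 2 := by
  simp [nsq, Fin.sum_univ_castSucc]

/-- The last coordinate `cosh t + e^t s / 2` of `a_t n_v x₀`, with `s = |v|²`, is the one required by
the equation `[x,x] = 1` of the hyperboloid. -/
lemma one_add_sq_horo (s t : ℝ) :
    1 + (s + (sinh t + exp t * (s / 2)) ^ 2) = (cosh t + exp t * (s / 2)) ^ 2 := by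
  have h1 := Real.cosh_sq t
  have h2 : exp t * (cosh t - sinh t) = 1 := by
    rw [Real.cosh_sub_sinh, ← Real.exp_add]; simp
  linear_combination -h1 - s * h2

lemma cosh_add_pos {s : ℝ} (hs : 0 ≤ s) (t : ℝ) : 0 < cosh t + exp t * (s / 2) := by
  have := Real.cosh_pos t
  positivity

/-- `a_t n_v x₀ = (v, sinh t + e^t |v|² / 2, cosh t + e^t |v|² / 2)`. -/
lemma aMat_nMat_origin (m : ℕ) (t : ℝ) (v : Fin m → ℝ) :
    (aMat (m + 1) t * nMat (m + 1) v).mulVec (origin (m + 1)) =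
      hypLift (m + 1) (Fin.snoc v (sinh t + exp t * (nsq v / 2))) := by
  ext i
  rw [mulVec_origin, Matrix.mul_apply, Fin.sum_univ_castSucc, Fin.sum_univ_castSucc]
  have hE := Real.cosh_add_sinh t
  induction i using Fin.lastCases with
  | last =>
    have : √(1 + (nsq v + (sinh t + exp t * (nsq v / 2)) ^ 2)) = cosh t + exp t * (nsq v / 2) := by
      rw [one_add_sq_horo, Real.sqrt_sq (cosh_add_pos (nsq_nonneg_s3 v) t).le]
    simp [aMat, nMat, hypLift, nsq_snoc, this]
    rw [Finset.sum_eq_zero]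
    · linear_combination (nsq v / 2) * hE
    · intro x _
      have := x.2
      simp [this.ne]
      omega
  | cast i =>
    induction i using Fin.lastCases with
    | last =>
      simp [aMat, nMat, hypLift, Fin.snoc]
      rw [Finset.sum_eq_zero]
      · linear_combination (nsq v / 2) * hE
      · intro x _
        have := x.2
        simp [this.ne]
        omega
    | cast i =>
      have := i.2
      simp [aMat, nMat, hypLift, Fin.snoc,
        (by omega : (i : ℕ) < m + 1), Fin.val_inj]

/-! ### Changes of variables -/

/-- The map `(u, w) ↦ u + w` identifies `ℝ^{m-d} × ℝ^d` with `ℝ^m`, preserving Lebesgue measure. -/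
lemma lintegral_embU_add_embW {m d : ℕ} (hd : d ≤ m) {g : (Fin m → ℝ) → ℝ≥0∞}
    (hg : Measurable g) :
    ∫⁻ u : Fin (m + 1 - 1 - d) → ℝ, ∫⁻ w : Fin d → ℝ, g (embU (m + 1) d u + embW (m + 1) d w)
      = ∫⁻ v, g v := by
  let e : Fin (m + 1 - 1 - d) ⊕ Fin d ≃ Fin m := finSumFinEquiv.trans (finCongr (by omega))
  let T := (MeasurableEquiv.sumPiEquivProdPi (fun _ : Fin (m + 1 - 1 - d) ⊕ Fin d => ℝ)).symm.trans
    (MeasurableEquiv.piCongrLeft (fun _ => ℝ) e)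
  have hT : MeasurePreserving T volume volume :=
    (volume_measurePreserving_piCongrLeft (fun _ => ℝ) e).comp
      (volume_measurePreserving_sumPiEquivProdPi_symm
        (fun _ : Fin (m + 1 - 1 - d) ⊕ Fin d => ℝ))
  have hTe : ∀ u w, T (u, w) = embU (m + 1) d u + embW (m + 1) d w := by
    intro u w
    funext i
    obtain ⟨s, rfl⟩ := e.surjective i
    have h1 : T (u, w) (e s) = Sum.elim u w s := by
      simp only [T, MeasurableEquiv.trans_apply, MeasurableEquiv.coe_piCongrLeft]
      rw [Equiv.piCongrLeft_apply_apply]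
      cases s <;> rfl
    rw [h1]
    -- On each summand one of the two embeddings vanishes and the other returns the coordinate.
    rcases s with i | i
    · have := i.2
      simp [e, embU, embW]
      intro _ _
      omega
    · simp [e, embU, embW]
  rw [← hT.lintegral_comp hg, Measure.volume_eq_prod,
    lintegral_prod (fun p => g (T p)) (hg.comp T.measurable).aemeasurable]
  simp only [hTe]

/-- The one-dimensional substitution `y = sinh t + e^t s / 2`, whose derivative
`cosh t + e^t s / 2` equals `√(1 + s + y²)`. -/
lemma lintegral_horo {s : ℝ} (hs : 0 ≤ s) (g : ℝ → ℝ≥0∞) :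
    ∫⁻ t, g (sinh t + exp t * (s / 2)) =
      ∫⁻ y, ENNReal.ofReal (√(1 + (s + y ^ 2)))⁻¹ * g y := by
  have hder : ∀ t, HasDerivAt (fun t => sinh t + exp t * (s / 2))
      (cosh t + exp t * (s / 2)) t := fun t =>
    (Real.hasDerivAt_sinh t).add ((Real.hasDerivAt_exp t).mul_const _)
  have hmono : StrictMono fun t => sinh t + exp t * (s / 2) :=
    strictMono_of_deriv_pos fun t => by rw [(hder t).deriv]; exact cosh_add_pos hs t
  have hcont : Continuous fun t => sinh t + exp t * (s / 2) := by fun_prop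
  have hsurj : Function.Surjective fun t => sinh t + exp t * (s / 2) := by
    refine hcont.surjective ?_ ?_
    · refine Filter.tendsto_atTop_mono (fun t => ?_) Real.sinhOrderIso.tendsto_atTop
      simp only [Real.sinhOrderIso_apply]
      have : 0 ≤ exp t * (s / 2) := by positivity
      linarith
    · have h1 : Filter.Tendsto (fun t => sinh t + s / 2) Filter.atBot Filter.atBot :=
        Filter.tendsto_atBot_add_const_right _ _ Real.sinhOrderIso.tendsto_atBot
      refine Filter.tendsto_atBot_mono' _ ?_ h1
      filter_upwards [Filter.eventually_le_atBot 0] with t ht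
      have : exp t ≤ 1 := Real.exp_le_one_iff.2 ht
      nlinarith
  -- The derivative cancels the density `1 / √(1 + s + y²)`.
  have key := lintegral_image_eq_lintegral_abs_deriv_mul MeasurableSet.univ
    (fun t _ => (hder t).hasDerivWithinAt) hmono.injective.injOn
    (fun y => ENNReal.ofReal (√(1 + (s + y ^ 2)))⁻¹ * g y)
  rw [Set.image_univ, hsurj.range_eq, Measure.restrict_univ] at key
  rw [key]
  refine lintegral_congr fun t => ?_
  have hp := cosh_add_pos hs t
  rw [one_add_sq_horo, Real.sqrt_sq hp.le, abs_of_pos hp, ← mul_assoc,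
    ← ENNReal.ofReal_mul hp.le, mul_inv_cancel₀ hp.ne', ENNReal.ofReal_one, one_mul]

/-! ### The invariant measure in graph coordinates -/

/-- Integration in polar coordinates on `ℝ^{m+1}`. -/
lemma lintegral_polar (m : ℕ) {F : EuclideanSpace ℝ (Fin (m + 1)) → ℝ≥0∞} (hF : Measurable F) :
    ∫⁻ x, F x = ∫⁻ θ : Metric.sphere (0 : EuclideanSpace ℝ (Fin (m + 1))) 1,
      ∫⁻ ρ in Ioi (0 : ℝ), ENNReal.ofReal (ρ ^ m) * F (ρ • (θ : EuclideanSpace ℝ (Fin (m + 1))))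
        ∂volume ∂(volume.toSphere) := by
  have hmp := (volume : Measure (EuclideanSpace ℝ (Fin (m + 1)))).measurePreserving_homeomorphUnitSphereProd
  have hdim : Module.finrank ℝ (EuclideanSpace ℝ (Fin (m + 1))) - 1 = m := by simp
  rw [hdim] at hmp
  have hG : Measurable fun p : Metric.sphere (0 : EuclideanSpace ℝ (Fin (m + 1))) 1 × Ioi (0 : ℝ) =>
      F ((p.2 : ℝ) • (p.1 : EuclideanSpace ℝ (Fin (m + 1)))) := hF.comp (by fun_prop)
  have h1 := hmp.lintegral_comp hG
  have h2 : ∀ x : ({0}ᶜ : Set (EuclideanSpace ℝ (Fin (m + 1)))),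
      (((homeomorphUnitSphereProd (EuclideanSpace ℝ (Fin (m + 1))) x).2 : ℝ) •
        ((homeomorphUnitSphereProd (EuclideanSpace ℝ (Fin (m + 1))) x).1 :
          EuclideanSpace ℝ (Fin (m + 1)))) = x := by
    intro x
    have := homeomorphUnitSphereProd_symm_apply_coe (EuclideanSpace ℝ (Fin (m + 1)))
      (homeomorphUnitSphereProd _ x)
    rw [← this, Homeomorph.symm_apply_apply]
  simp only [h2] at h1
  rw [lintegral_subtype_comap (measurableSet_singleton _).compl, restrict_compl_singleton,
    lintegral_prod _ hG.aemeasurable] at h1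
  rw [h1]
  refine lintegral_congr fun θ => ?_
  have hθ : Measurable fun ρ : Ioi (0 : ℝ) =>
      F ((ρ : ℝ) • (θ : EuclideanSpace ℝ (Fin (m + 1)))) := hG.comp measurable_prodMk_left
  rw [Measure.volumeIoiPow, lintegral_withDensity_eq_lintegral_mul _ (by fun_prop) hθ]
  exact lintegral_subtype_comap (μ := volume) measurableSet_Ioi
    fun ρ : ℝ => ENNReal.ofReal (ρ ^ m) * F (ρ • (θ : EuclideanSpace ℝ (Fin (m + 1))))

lemma nsq_sinh_smul {n : ℕ} (θ : Metric.sphere (0 : EuclideanSpace ℝ (Fin n)) 1) (r : ℝ) :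
    1 + nsq (sinh r • (θ : EuclideanSpace ℝ (Fin n))).ofLp = cosh r ^ 2 := by
  have h : ‖(θ : EuclideanSpace ℝ (Fin n))‖ = 1 := by simp
  have h2 := EuclideanSpace.norm_sq_eq (θ : EuclideanSpace ℝ (Fin n))
  rw [h] at h2
  simp only [Real.norm_eq_abs, sq_abs] at h2
  rw [nsq]
  simp only [PiLp.smul_apply, smul_eq_mul, mul_pow, ← Finset.mul_sum, ← h2]
  rw [Real.cosh_sq]; ring

lemma hypLift_sinh_smul {n : ℕ} (θ : Metric.sphere (0 : EuclideanSpace ℝ (Fin n)) 1) (r : ℝ) :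
    hypLift n (sinh r • (θ : EuclideanSpace ℝ (Fin n))).ofLp = hypPoint n θ r := by
  funext i
  simp only [hypLift, hypPoint, nsq_sinh_smul, Real.sqrt_sq (Real.cosh_pos r).le]
  rfl

/-- In the coordinates `y ∈ ℝ^{m+1}` of the hyperboloid the invariant measure is
`dy / √(1 + |y|²)`: in polar coordinates `y = ρ θ`, substitute `ρ = sinh r`. -/
lemma lintegral_hypMeasure (m : ℕ) {f : (Fin (m + 1 + 1) → ℝ) → ℝ≥0∞} (hf : Measurable f) :
    ∫⁻ x, f x ∂hypMeasure (m + 1) =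
      ∫⁻ y, ENNReal.ofReal (√(1 + nsq y))⁻¹ * f (hypLift (m + 1) y) := by
  have hl := measurable_hypLift (m + 1)
  have hq := measurable_nsq (n := m + 1)
  have hG : Measurable fun y : Fin (m + 1) → ℝ =>
      ENNReal.ofReal (√(1 + nsq y))⁻¹ * f (hypLift (m + 1) y) := by fun_prop
  have hP : Measurable fun p : Metric.sphere (0 : EuclideanSpace ℝ (Fin (m + 1))) 1 × ℝ =>
      hypPoint (m + 1) p.1 p.2 := by
    rw [measurable_pi_iff]
    intro i
    unfold hypPoint
    split_ifs <;> fun_prop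
  have hfP : Measurable fun p : Metric.sphere (0 : EuclideanSpace ℝ (Fin (m + 1))) 1 × ℝ =>
      f (hypPoint (m + 1) p.1 p.2) := hf.comp hP
  have hsinh : sinh '' Ioi (0 : ℝ) = Ioi 0 := by
    ext y
    constructor
    · rintro ⟨r, hr, rfl⟩
      exact Real.sinh_pos_iff.2 hr
    · intro hy
      exact ⟨arsinh y, Real.arsinh_pos_iff.2 hy, Real.sinh_arsinh y⟩
  rw [← (PiLp.volume_preserving_ofLp (Fin (m + 1))).lintegral_comp hG,
    lintegral_polar m (F := fun x => ENNReal.ofReal (√(1 + nsq x.ofLp))⁻¹ *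
      f (hypLift (m + 1) x.ofLp)) (hG.comp (g := fun y : Fin (m + 1) → ℝ =>
        ENNReal.ofReal (√(1 + nsq y))⁻¹ * f (hypLift (m + 1) y)) (by fun_prop)), hypMeasure, lintegral_map hf hP,
    lintegral_prod _ hfP.aemeasurable]
  refine lintegral_congr fun θ => ?_
  rw [lintegral_withDensity_eq_lintegral_mul _ (by fun_prop)
    (f := fun r => ENNReal.ofReal (sinh r ^ (m + 1 - 1)))
    (g := fun r => f (hypPoint (m + 1) θ r)) (hfP.comp measurable_prodMk_left)]
  -- The factor `cosh r` coming from `ρ = sinh r` cancels the density `1 / √(1 + ρ²)`.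
  conv_rhs => rw [← hsinh]
  rw [lintegral_image_eq_lintegral_abs_deriv_mul measurableSet_Ioi
    (fun r _ => (Real.hasDerivAt_sinh r).hasDerivWithinAt) Real.sinh_injective.injOn]
  refine lintegral_congr fun r => ?_
  have hp := Real.cosh_pos r
  simp only [Pi.mul_apply, nsq_sinh_smul, hypLift_sinh_smul, Real.sqrt_sq hp.le, abs_of_pos hp,
    Nat.add_sub_cancel]
  rw [mul_left_comm, ← mul_assoc (ENNReal.ofReal (cosh r)), ← ENNReal.ofReal_mul hp.le,
    mul_inv_cancel₀ hp.ne', ENNReal.ofReal_one, one_mul]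

/-! ### Invariance under rotations and horospherical coordinates -/

/-- In graph coordinates `diag(k, 1)` acts by `y ↦ k y`, which preserves `|y|²`. -/
lemma embSO_mulVec_hypLift {n : ℕ} {k : Fin n → Fin n → ℝ} (hk : k ∈ SOset n) (y : Fin n → ℝ) :
    (embSO n k).mulVec (hypLift n y) = hypLift n ((Matrix.of k).mulVec y) ∧
      nsq ((Matrix.of k).mulVec y) = nsq y := by
  have hn : nsq ((Matrix.of k).mulVec y) = nsq y := by
    have h : (Matrix.of k).transpose * Matrix.of k = 1 := mul_eq_one_comm.1 hk.1
    have h2 : ∀ z : Fin n → ℝ, nsq z = z ⬝ᵥ z := fun z => by simp [nsq, dotProduct, sq]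
    rw [h2, h2, Matrix.dotProduct_mulVec, Matrix.vecMul_mulVec, h]
    simp
  refine ⟨?_, hn⟩
  ext i
  simp only [Matrix.mulVec, dotProduct, Fin.sum_univ_castSucc] at hn ⊢
  induction i using Fin.lastCases with
  | last => simp [embSO, hypLift, hn]
  | cast i => simp [embSO, hypLift, Matrix.mulVec, dotProduct]

lemma measurePreserving_SO {n : ℕ} {k : Fin n → Fin n → ℝ} (hk : k ∈ SOset n) :
    MeasurePreserving (fun y : Fin n → ℝ => (Matrix.of k).mulVec y) volume volume := by
  have h := Real.map_matrix_volume_pi_eq_smul_volume_pi (M := Matrix.of k)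
    (by rw [hk.2]; exact one_ne_zero)
  rw [hk.2] at h
  refine ⟨by fun_prop, ?_⟩
  rw [abs_of_pos (by norm_num), inv_one, ENNReal.ofReal_one, one_smul] at h
  exact h

/-- The invariant measure on `H^n` is `SO(n)`-invariant. -/
lemma lintegral_hypMeasure_embSO {m : ℕ} {k : Fin (m + 1) → Fin (m + 1) → ℝ} (hk : k ∈ SOset (m + 1))
    {f : (Fin (m + 1 + 1) → ℝ) → ℝ≥0∞} (hf : Measurable f) :
    ∫⁻ x, f ((embSO (m + 1) k).mulVec x) ∂hypMeasure (m + 1) = ∫⁻ x, f x ∂hypMeasure (m + 1) := by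
  have hm : Measurable fun x => (embSO (m + 1) k).mulVec x := by fun_prop
  have hl := measurable_hypLift (m + 1)
  have hq := measurable_nsq (n := m + 1)
  have hG : Measurable fun y : Fin (m + 1) → ℝ =>
      ENNReal.ofReal (√(1 + nsq y))⁻¹ * f (hypLift (m + 1) y) := by fun_prop
  rw [lintegral_hypMeasure m hf, lintegral_hypMeasure m (f := fun x => f ((embSO (m + 1) k).mulVec x)) (hf.comp hm),
    ← (measurePreserving_SO hk).lintegral_comp hG]
  refine lintegral_congr fun y => ?_
  simp only [(embSO_mulVec_hypLift hk y).1, (embSO_mulVec_hypLift hk y).2]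

/-- The invariant measure in horospherical coordinates `(t, v) ↦ a_t n_v x₀` is `dt dv`. -/
lemma lintegral_horospherical (m : ℕ) {f : (Fin (m + 1 + 1) → ℝ) → ℝ≥0∞} (hf : Measurable f) :
    ∫⁻ t, ∫⁻ v : Fin m → ℝ, f ((aMat (m + 1) t * nMat (m + 1) v).mulVec (origin (m + 1))) =
      ∫⁻ x, f x ∂hypMeasure (m + 1) := by
  have hsnoc : Measurable fun p : ℝ × (Fin m → ℝ) => (Fin.snoc p.2 p.1 : Fin (m + 1) → ℝ) := by
    rw [measurable_pi_iff]
    intro i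
    induction i using Fin.lastCases with
    | last => simpa using measurable_fst
    | cast i => simp only [Fin.snoc_castSucc]; fun_prop
  have hl := measurable_hypLift (m + 1)
  have hq := measurable_nsq (n := m)
  have hq' := measurable_nsq (n := m + 1)
  simp only [aMat_nMat_origin]
  rw [lintegral_lintegral_swap]
  · rw [lintegral_hypMeasure _ hf]
    have h1 := (volume_preserving_piFinSuccAbove (fun _ : Fin (m + 1) => ℝ) (Fin.last m)).symm
    have hG : Measurable fun y : Fin (m + 1) → ℝ =>
        ENNReal.ofReal (√(1 + nsq y))⁻¹ * f (hypLift (m + 1) y) := by fun_prop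
    rw [← h1.lintegral_comp hG, Measure.volume_eq_prod,
      lintegral_prod_symm _ (Measurable.aemeasurable (by fun_prop))]
    refine lintegral_congr fun v => ?_
    rw [lintegral_horo (nsq_nonneg_s3 v) fun y => f (hypLift (m + 1) (Fin.snoc v y))]
    refine lintegral_congr fun y => ?_
    have : (MeasurableEquiv.piFinSuccAbove (fun _ : Fin (m + 1) => ℝ) (Fin.last m)).symm (y, v) =
        Fin.snoc v y := by
      simp [MeasurableEquiv.piFinSuccAbove, Fin.insertNthEquiv, Fin.insertNth_last']
    rw [this, nsq_snoc]
  · refine Measurable.aemeasurable ?_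
    refine (hf.comp hl).comp (hsnoc.comp (f := fun p : ℝ × (Fin m → ℝ) =>
      (sinh p.1 + exp p.1 * (nsq p.2 / 2), p.2)) ?_)
    fun_prop

/-- integrating the `d`-horospherical transform over all parameters
recovers the total integral of `f`. -/
theorem horospherical_transform_total_integral
    (n d : ℕ) (hn : 2 ≤ n) (hd1 : 1 ≤ d) (hdn : d ≤ n - 1)
    (f : (Fin (n + 1) → ℝ) → ℝ≥0∞) (hf : Measurable f)
    (k : Fin n → Fin n → ℝ) (hk : k ∈ SOset n) :
    (d < n - 1 →
      (∫⁻ t : ℝ, ∫⁻ u : Fin (n - 1 - d) → ℝ, ∫⁻ w : Fin d → ℝ,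
          f ((embSO n k * aMat n t * nMat n (embU n d u + embW n d w)).mulVec (origin n)))
        = ∫⁻ x, f x ∂hypMeasure n) ∧
    (d = n - 1 →
      (∫⁻ t : ℝ, ∫⁻ w : Fin (n - 1) → ℝ,
          f ((embSO n k * aMat n t * nMat n w).mulVec (origin n)))
        = ∫⁻ x, f x ∂hypMeasure n) := by
  obtain ⟨m, rfl⟩ : ∃ m, n = m + 1 := ⟨n - 1, by omega⟩
  have hfk : Measurable fun x => f ((embSO (m + 1) k).mulVec x) :=
    hf.comp (by fun_prop)
  simp only [Matrix.mul_assoc, ← Matrix.mulVec_mulVec (v := origin (m + 1)) (M := embSO (m + 1) k)]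
  rw [← lintegral_hypMeasure_embSO hk hf, ← lintegral_horospherical m hfk]
  refine ⟨fun _ => lintegral_congr fun t => ?_, fun _ => rfl⟩
  refine lintegral_embU_add_embW (m := m) hdn
    (g := fun v => f ((embSO (m + 1) k).mulVec
      ((aMat (m + 1) t * nMat (m + 1) v).mulVec (origin (m + 1))))) ?_
  have hl := measurable_hypLift (m + 1)
  have hq := measurable_nsq (n := m)
  simp only [aMat_nMat_origin]
  refine (hfk.comp hl).comp ?_
  rw [measurable_pi_iff]
  intro i
  induction i using Fin.lastCases with
  | last => simp only [Fin.snoc_last]; fun_prop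
  | cast i => simp only [Fin.snoc_castSucc]; fun_prop
end
end

section
/- Let p ≥ 2(n-1)/d and define f_0(s) = (s² - 1)^{(1 - n/2)/p} · (s+1)^{-1/p} · (log(s+1))^{-1} for s > 1, and f(x) = f_0(x_{n+1}) on H^n. Then f belongs to L^p(H^n), i.e. σ_{n-1} ∫_1^∞ f_0(s)^p (s² - 1)^{n/2 - 1} ds < ∞, while ∫_η^∞ f_0(s) (s - η)^{d/2 - 1} ds = +∞ for every η ≥ 1. Consequently the d-horospherical transform \hat f(a_t n_u ξ_0) = ∫_{ℝ^d} f(a_t n_{u+w} x_0) dw equals +∞ for every t ∈ ℝ and u ∈ ℝ^{n-1-d}, so the condition p < 2(n-1)/d in the L^p existence theorem for \hat f is sharp. -/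
/-!
The density `(s² - 1)^{n/2-1}` cancels the first factor of `f₀ ^ p`, so the `L^p` norm is the
integral over `s > 1` of `1/((s+1) log^p (s+1))`, which converges because `p ≥ 2(n-1)/d ≥ 2`
(`integrableOn_inv_mul_log_rpow`).

For the divergence, `f₀(s) ≥ (s+1)^{-(n-1)/p} / log (s+1)`, and `p ≥ 2(n-1)/d` makes this at least
`(s+1)^{-d/2} / log (s+1)`. Multiplied by the kernel `(s-η)^{d/2-1}`, which is comparable to
`(s+1)^{d/2-1}` at infinity, this dominates a multiple of `1/((s+1) log (s+1))`, whose integral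
diverges (`not_integrableOn_inv_mul_log`, `not_integrableOn_prof_mul_kernel`).

For the transform, the height of `a_t n_{u+w} x₀` is `η + (e^t/2)|w|²` with
`η = cosh t + (e^t/2)|u|² ≥ 1` (`height_eq`, `nsq_embU_add_embW`). Polar coordinates in `ℝ^d` and
the substitution `s = η + (e^t/2) r²` reduce the integral over the horosphere to the
one-dimensional integral at this `η` (`integrableOn_kernel_of_integrable_horo`).
Since all integrands are nonnegative and measurable, infinite integral means non-integrable.
-/

open MeasureTheory Real Set
open scoped ENNReal

noncomputable section

/-! ### Heights along a horosphere -/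

/-- The `x_{n+1}`-coordinate of `a_t n_v x₀`: the height function on the orbit. -/
theorem height_eq (n : ℕ) (hn : 1 ≤ n) (t : ℝ) (v : Fin (n - 1) → ℝ) :
    ((aMat n t * nMat n v).mulVec (origin n)) (Fin.last n) =
      Real.cosh t + Real.exp t / 2 * nsq v := by
  obtain ⟨m, rfl⟩ : ∃ m, n = m + 1 := ⟨n - 1, by omega⟩
  have h1 : ((aMat (m + 1) t * nMat (m + 1) v).mulVec (origin (m + 1))) (Fin.last (m + 1)) =
      (aMat (m + 1) t * nMat (m + 1) v) (Fin.last (m + 1)) (Fin.last (m + 1)) := by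
    simp [Matrix.mulVec, dotProduct, origin]
  rw [h1, Matrix.mul_apply, Fin.sum_univ_castSucc, Fin.sum_univ_castSucc, Finset.sum_eq_zero]
  · simp [aMat, nMat]
    rw [← Real.cosh_add_sinh]
    ring
  · intro i _
    have := i.2
    have h2 : ¬ ((i : ℕ) = m) := by omega
    have h3 : ¬ ((i : ℕ) = m + 1) := by omega
    simp [aMat, h2, h3]

theorem nsq_embU_add_embW (n d : ℕ) (hdn : d ≤ n - 1) (u : Fin (n - 1 - d) → ℝ)
    (w : Fin d → ℝ) : nsq (embU n d u + embW n d w) = nsq u + nsq w := by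
  have e : n - 1 - d + d = n - 1 := by omega
  unfold nsq
  rw [← (finCongr e).sum_comp, Fin.sum_univ_add]
  congr 1
  · refine Finset.sum_congr rfl fun i _ => ?_
    have h2 : ¬ (n - 1 - d ≤ (i : ℕ)) := by omega
    simp [embU, embW, h2]
  · refine Finset.sum_congr rfl fun i _ => ?_
    simp [embU, embW]

/-! ### Logarithmic integrals at infinity -/

/-- The iterated logarithm `log log (s+1)` is unbounded, so `1/((s+1) log (s+1))` has divergent
integral at infinity. -/
theorem not_integrableOn_inv_mul_log (a : ℝ) :
    ¬ IntegrableOn (fun s : ℝ => (s + 1)⁻¹ * (Real.log (s + 1))⁻¹) (Ioi a) := by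
  have A : ∀ᶠ x : ℝ in Filter.atTop, HasDerivAt (fun x => Real.log (Real.log (x + 1)))
      ((x + 1)⁻¹ * (Real.log (x + 1))⁻¹) x := by
    filter_upwards [Filter.Ioi_mem_atTop 0] with x hx
    have hx : 0 < x := hx
    have h1 : 0 < Real.log (x + 1) := Real.log_pos (by linarith)
    have := (((hasDerivAt_id x).add_const 1).log (by simp; positivity)).log (by simpa using h1.ne')
    refine this.congr_deriv ?_
    simp [div_eq_mul_inv]
  have h0 : Filter.Tendsto (fun x : ℝ => x + 1) Filter.atTop Filter.atTop :=
    Filter.tendsto_atTop_add_const_right _ _ Filter.tendsto_id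
  have B : Filter.Tendsto (fun x => ‖Real.log (Real.log (x + 1))‖) Filter.atTop Filter.atTop :=
    tendsto_norm_atTop_atTop.comp
      (Real.tendsto_log_atTop.comp (Real.tendsto_log_atTop.comp h0))
  exact not_integrableOn_of_tendsto_norm_atTop_of_deriv_isBigO_filter Filter.atTop
    (Filter.Ioi_mem_atTop a) (A.mono fun x hx => hx.differentiableAt) B
    (Filter.EventuallyEq.isBigO (A.mono fun x hx => hx.deriv))

/-- For `p > 1`, `1/((s+1) log^p (s+1))` is the derivative of `-(p-1)⁻¹ log^{1-p} (s+1)`, which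
tends to `0` at infinity. -/
theorem integrableOn_inv_mul_log_rpow (p : ℝ) (hp : 1 < p) :
    IntegrableOn (fun s : ℝ => (s + 1)⁻¹ * (Real.log (s + 1)) ^ (-p)) (Ioi 1) := by
  have h0 : Filter.Tendsto (fun x : ℝ => x + 1) Filter.atTop Filter.atTop :=
    Filter.tendsto_atTop_add_const_right _ _ Filter.tendsto_id
  refine integrableOn_Ioi_deriv_of_nonneg'
    (g := fun s => -(p - 1)⁻¹ * (Real.log (s + 1)) ^ (-(p - 1))) (l := -(p - 1)⁻¹ * 0) ?_ ?_ ?_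
  · intro x hx
    have hx : 1 ≤ x := hx
    have h1 : 0 < Real.log (x + 1) := Real.log_pos (by linarith)
    have h2 := ((((hasDerivAt_id x).add_const 1).log (by simp; positivity)).rpow_const
      (p := -(p - 1)) (Or.inl (by simpa using h1.ne'))).const_mul (-(p - 1)⁻¹)
    refine h2.congr_deriv ?_
    have h3 : -(p - 1) - 1 = -p := by ring
    have h4 : p - 1 ≠ 0 := by linarith
    have h5 : x + 1 ≠ 0 := by linarith
    rw [h3]
    simp only [id]
    field_simp
  · intro x hx
    have hx : 1 < x := hx
    have h1 : 0 < Real.log (x + 1) := Real.log_pos (by linarith)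
    positivity
  · exact ((tendsto_rpow_neg_atTop (by linarith : 0 < p - 1)).comp
      (Real.tendsto_log_atTop.comp h0)).const_mul _

/-! ### The profile and its fractional integral -/

/-- The profile `f₀` of the test function `f`, as a function of the height `s = x_{n+1}`. -/
def prof (n : ℕ) (p s : ℝ) : ℝ :=
  (s ^ 2 - 1) ^ ((1 - (n : ℝ) / 2) / p) * (s + 1) ^ (-(1 / p)) * (Real.log (s + 1))⁻¹

theorem measurable_prof (n : ℕ) (p : ℝ) : Measurable (prof n p) := by
  unfold prof
  fun_prop

theorem prof_nonneg (n : ℕ) (p s : ℝ) (hs : 1 ≤ s) : 0 ≤ prof n p s := by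
  have h1 : 0 ≤ Real.log (s + 1) := Real.log_nonneg (by linarith)
  have h2 : 0 ≤ s ^ 2 - 1 := by nlinarith
  unfold prof
  positivity

/-- The density `(s² - 1)^{n/2-1}` exactly cancels the first factor of `f₀ ^ p`. -/
theorem prof_rpow_mul (n : ℕ) (p s : ℝ) (hp : 0 < p) (hs : 1 < s) :
    prof n p s ^ p * (s ^ 2 - 1) ^ ((n : ℝ) / 2 - 1) = (s + 1)⁻¹ * (Real.log (s + 1)) ^ (-p) := by
  have h1 : 0 < Real.log (s + 1) := Real.log_pos (by linarith)
  have h2 : 0 < s ^ 2 - 1 := by nlinarith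
  have h3 : 0 < s + 1 := by linarith
  unfold prof
  rw [Real.mul_rpow (by positivity) (by positivity), Real.mul_rpow (by positivity) (by positivity),
    ← Real.rpow_mul h2.le, ← Real.rpow_mul h3.le, Real.inv_rpow h1.le, ← Real.rpow_neg h1.le,
    div_mul_cancel₀ _ hp.ne']
  have h4 : -(1 / p) * p = -1 := by field_simp
  have h5 : (s ^ 2 - 1) ^ (1 - (n : ℝ) / 2) * (s ^ 2 - 1) ^ ((n : ℝ) / 2 - 1) = 1 := by
    rw [← Real.rpow_add h2]; simp
  rw [h4, Real.rpow_neg_one]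
  linear_combination ((s + 1)⁻¹ * (Real.log (s + 1)) ^ (-p)) * h5

/-- Since `(n-1)/p ≤ d/2`, the profile decays no faster than `s^{-d/2} / log s`. -/
theorem prof_lower (n d : ℕ) (hn : 2 ≤ n) (p s : ℝ) (hp0 : 0 < p)
    (hp : ((n : ℝ) - 1) / p ≤ d / 2) (hs : 1 < s) :
    (s + 1) ^ (-((d : ℝ) / 2)) * (Real.log (s + 1))⁻¹ ≤ prof n p s := by
  have h1 : 0 < Real.log (s + 1) := Real.log_pos (by linarith)
  have h2 : 0 < s ^ 2 - 1 := by nlinarith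
  have h3 : 0 < s + 1 := by linarith
  have hn' : (2 : ℝ) ≤ n := by exact_mod_cast hn
  have h4 : (1 - (n : ℝ) / 2) / p ≤ 0 := div_nonpos_of_nonpos_of_nonneg (by linarith) hp0.le
  unfold prof
  refine mul_le_mul_of_nonneg_right ?_ (by positivity)
  calc (s + 1) ^ (-((d : ℝ) / 2)) ≤ (s + 1) ^ (-(((n : ℝ) - 1) / p)) :=
        Real.rpow_le_rpow_of_exponent_le (by linarith) (by linarith)
    _ = ((s + 1) ^ 2) ^ ((1 - (n : ℝ) / 2) / p) * (s + 1) ^ (-(1 / p)) := by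
        rw [← Real.rpow_natCast (s + 1) 2, ← Real.rpow_mul h3.le, ← Real.rpow_add h3]
        congr 1
        push_cast
        field_simp
        ring
    _ ≤ _ := by
        refine mul_le_mul_of_nonneg_right ?_ (by positivity)
        exact Real.rpow_le_rpow_of_nonpos h2 (by nlinarith) h4

/-- The kernel `(s-η)^{d/2-1}` is comparable to `(s+1)^{d/2-1}` for large `s`. The constant
`2^{-d/2}` serves both signs of the exponent `d/2 - 1`. -/
theorem kernel_lower (d : ℕ) (η s : ℝ) (hη : 1 ≤ η) (hs : 2 * η + 1 < s) :
    (2 : ℝ) ^ (-((d : ℝ) / 2)) * (s + 1) ^ ((d : ℝ) / 2 - 1) ≤ (s - η) ^ ((d : ℝ) / 2 - 1) := by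
  have h3 : 0 < s + 1 := by linarith
  have h4 : 0 < s - η := by linarith
  have hd0 : (0 : ℝ) ≤ d := Nat.cast_nonneg d
  rcases le_total ((d : ℝ) / 2 - 1) 0 with h | h
  · calc (2 : ℝ) ^ (-((d : ℝ) / 2)) * (s + 1) ^ ((d : ℝ) / 2 - 1)
        ≤ 1 * (s + 1) ^ ((d : ℝ) / 2 - 1) := by
          refine mul_le_mul_of_nonneg_right ?_ (by positivity)
          exact Real.rpow_le_one_of_one_le_of_nonpos (by norm_num) (by linarith)
      _ ≤ _ := by
          rw [one_mul]
          exact Real.rpow_le_rpow_of_nonpos h4 (by linarith) h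
  · calc (2 : ℝ) ^ (-((d : ℝ) / 2)) * (s + 1) ^ ((d : ℝ) / 2 - 1)
        ≤ (2 : ℝ) ^ (-((d : ℝ) / 2 - 1)) * (s + 1) ^ ((d : ℝ) / 2 - 1) := by
          refine mul_le_mul_of_nonneg_right ?_ (by positivity)
          exact Real.rpow_le_rpow_of_exponent_le (by norm_num) (by linarith)
      _ = ((s + 1) / 2) ^ ((d : ℝ) / 2 - 1) := by
          rw [Real.rpow_neg (by norm_num), Real.div_rpow h3.le (by norm_num)]
          ring
      _ ≤ _ := Real.rpow_le_rpow (by positivity) (by linarith) h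

theorem not_integrableOn_prof_mul_kernel (n d : ℕ) (hn : 2 ≤ n) (p : ℝ)
    (hp0 : 0 < p) (hp : ((n : ℝ) - 1) / p ≤ d / 2) (η : ℝ) (hη : 1 ≤ η) :
    ¬ IntegrableOn (fun s => prof n p s * (s - η) ^ ((d : ℝ) / 2 - 1)) (Ioi η) := by
  intro H
  refine not_integrableOn_inv_mul_log (2 * η + 1) ?_
  have H2 := (H.mono_set (Ioi_subset_Ioi (by linarith : η ≤ 2 * η + 1))).const_mul
    ((2 : ℝ) ^ ((d : ℝ) / 2))
  refine Integrable.mono' H2 (by fun_prop) ?_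
  filter_upwards [ae_restrict_mem measurableSet_Ioi] with s hs
  have hs : 2 * η + 1 < s := hs
  have h1 : 0 < Real.log (s + 1) := Real.log_pos (by linarith)
  have h3 : 0 < s + 1 := by linarith
  rw [Real.norm_of_nonneg (by positivity)]
  have k1 := prof_lower n d hn p s hp0 hp (by linarith)
  have k2 := kernel_lower d η s hη hs
  calc (s + 1)⁻¹ * (Real.log (s + 1))⁻¹
      = (2 : ℝ) ^ ((d : ℝ) / 2) * (((s + 1) ^ (-((d : ℝ) / 2)) * (Real.log (s + 1))⁻¹) *
        ((2 : ℝ) ^ (-((d : ℝ) / 2)) * (s + 1) ^ ((d : ℝ) / 2 - 1))) := by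
        have e1 : (2 : ℝ) ^ ((d : ℝ) / 2) * (2 : ℝ) ^ (-((d : ℝ) / 2)) = 1 := by
          rw [← Real.rpow_add (by norm_num)]; simp
        have e2 : (s + 1) ^ (-((d : ℝ) / 2)) * (s + 1) ^ ((d : ℝ) / 2 - 1) = (s + 1)⁻¹ := by
          rw [← Real.rpow_add h3, ← Real.rpow_neg_one]; congr 1; ring
        rw [← e2]
        linear_combination (-(s + 1) ^ (-((d : ℝ) / 2)) * (s + 1) ^ ((d : ℝ) / 2 - 1) *
          (Real.log (s + 1))⁻¹) * e1
    _ ≤ _ := by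
        refine mul_le_mul_of_nonneg_left ?_ (by positivity)
        exact mul_le_mul k1 k2 (by positivity) (prof_nonneg n p s (by linarith))

/-! ### Reduction of the horospherical integral -/

/-- Polar coordinates in `ℝ^d` and the substitution `s = η + c r²` turn the integral over the
horosphere into the Riemann–Liouville type integral of the profile. -/
theorem integrableOn_kernel_of_integrable_horo (d : ℕ) (hd1 : 1 ≤ d) (φ : ℝ → ℝ) (η c : ℝ)
    (hc : 0 < c) (H : Integrable (fun w : Fin d → ℝ => φ (η + c * nsq w))) :
    IntegrableOn (fun s => φ s * (s - η) ^ ((d : ℝ) / 2 - 1)) (Ioi η) := by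
  have : Nonempty (Fin d) := ⟨⟨0, hd1⟩⟩
  have H1 : Integrable (fun w : EuclideanSpace ℝ (Fin d) => φ (η + c * ‖w‖ ^ 2)) := by
    rw [← (PiLp.volume_preserving_toLp (Fin d)).integrable_comp_emb
      (MeasurableEquiv.toLp 2 (Fin d → ℝ)).measurableEmbedding]
    refine H.congr (ae_of_all _ fun w => ?_)
    simp [nsq, EuclideanSpace.norm_sq_eq]
  rw [integrable_fun_norm_addHaar (volume : Measure (EuclideanSpace ℝ (Fin d)))
    (f := fun r => φ (η + c * r ^ 2)), finrank_euclideanSpace_fin] at H1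
  have himg : (fun r : ℝ => η + c * r ^ 2) '' Ioi 0 = Ioi η := by
    ext s
    constructor
    · rintro ⟨r, hr, rfl⟩
      have hr : 0 < r := hr
      have : 0 < c * r ^ 2 := by positivity
      simpa using this
    · intro hs
      have hs : 0 < s - η := sub_pos.2 hs
      refine ⟨Real.sqrt ((s - η) / c), Real.sqrt_pos.2 (by positivity), ?_⟩
      simp only
      rw [Real.sq_sqrt (by positivity)]
      field_simp
      ring
  have hinj : InjOn (fun r : ℝ => η + c * r ^ 2) (Ioi 0) := by
    intro a ha b hb hab
    have ha : 0 < a := ha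
    have hb : 0 < b := hb
    have h : a ^ 2 = b ^ 2 := by simpa [hc.ne'] using hab
    exact (pow_left_inj₀ ha.le hb.le (by norm_num)).1 h
  rw [← himg, integrableOn_image_iff_integrableOn_abs_deriv_smul measurableSet_Ioi
    (f' := fun r => c * (2 * r)) (fun r _ => by
      have := ((hasDerivAt_pow 2 r).const_mul c).const_add η
      simpa using this.hasDerivWithinAt) hinj]
  refine (Integrable.const_mul H1 (2 * c * c ^ ((d : ℝ) / 2 - 1))).congr ?_
  filter_upwards [ae_restrict_mem measurableSet_Ioi] with r hr
  have hr : 0 < r := hr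
  have e1 : η + c * r ^ 2 - η = c * r ^ 2 := by ring
  have e2 : r * (r ^ 2) ^ ((d : ℝ) / 2 - 1) = r ^ (d - 1) := by
    rw [← Real.rpow_natCast r 2, ← Real.rpow_mul hr.le, ← Real.rpow_natCast r (d - 1),
      Nat.cast_sub hd1]
    nth_rewrite 1 [← Real.rpow_one r]
    rw [← Real.rpow_add hr]
    congr 1
    push_cast
    ring
  rw [abs_of_pos (by positivity), e1, Real.mul_rpow hc.le (by positivity), ← e2]
  simp only [smul_eq_mul]
  ring

/-- sharpness of the condition `p < 2(n-1)/d` in the `L^p` existence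
theorem for the `d`-horospherical transform. -/
theorem horospherical_transform_Lp_sharp
    (n d : ℕ) (hn : 2 ≤ n) (hd1 : 1 ≤ d) (hdn : d ≤ n - 1)
    (p : ℝ) (hp : 2 * ((n : ℝ) - 1) / d ≤ p)
    (f₀ : ℝ → ℝ)
    (hf₀ : ∀ s : ℝ, f₀ s =
      (s ^ 2 - 1) ^ ((1 - (n : ℝ) / 2) / p) * (s + 1) ^ (-(1 / p)) * (Real.log (s + 1))⁻¹) :
    (ENNReal.ofReal (sphereArea (n - 1)) *
        ∫⁻ s in Set.Ioi (1 : ℝ),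
          ENNReal.ofReal (f₀ s ^ p * (s ^ 2 - 1) ^ ((n : ℝ) / 2 - 1)) < ⊤) ∧
    (∀ η : ℝ, 1 ≤ η →
      (∫⁻ s in Set.Ioi η, ENNReal.ofReal (f₀ s * (s - η) ^ ((d : ℝ) / 2 - 1))) = ⊤) ∧
    (∀ (t : ℝ) (u : Fin (n - 1 - d) → ℝ),
      (∫⁻ w : Fin d → ℝ, ENNReal.ofReal
          (f₀ (((aMat n t * nMat n (embU n d u + embW n d w)).mulVec (origin n))
            (Fin.last n)))) = ⊤) := by
  obtain rfl : f₀ = prof n p := funext hf₀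
  have hn' : (2 : ℝ) ≤ n := by exact_mod_cast hn
  have hd' : (1 : ℝ) ≤ d := by exact_mod_cast hd1
  have hdn' : (d : ℝ) ≤ (n : ℝ) - 1 := by
    rw [← Nat.cast_one, ← Nat.cast_sub (by omega)]
    exact_mod_cast hdn
  have hp2 : 2 ≤ p := by
    refine le_trans ?_ hp
    rw [le_div_iff₀ (by linarith)]
    linarith
  have hp0 : 0 < p := by linarith
  have hpd : ((n : ℝ) - 1) / p ≤ d / 2 := by
    rw [div_le_iff₀ (by linarith)] at hp
    rw [div_le_div_iff₀ hp0 (by norm_num)]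
    linarith
  refine ⟨?_, ?_, ?_⟩
  · refine ENNReal.mul_lt_top ENNReal.ofReal_lt_top ?_
    rw [setLIntegral_congr_fun measurableSet_Ioi
      (fun s hs => congrArg ENNReal.ofReal (prof_rpow_mul n p s hp0 hs))]
    exact (integrableOn_inv_mul_log_rpow p (by linarith)).lintegral_lt_top
  · intro η hη
    by_contra hne
    refine not_integrableOn_prof_mul_kernel n d hn p hp0 hpd η hη ?_
    refine (lintegral_ofReal_ne_top_iff_integrable ?_ ?_).1 hne
    · exact ((measurable_prof n p).mul (by fun_prop)).aestronglyMeasurable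
    · filter_upwards [ae_restrict_mem measurableSet_Ioi] with s hs
      have hs : η < s := hs
      exact mul_nonneg (prof_nonneg n p s (by linarith)) (Real.rpow_nonneg (by linarith) _)
  · intro t u
    have hnsq : ∀ {m : ℕ} (v : Fin m → ℝ), 0 ≤ nsq v := fun v =>
      Finset.sum_nonneg fun i _ => sq_nonneg _
    have hη : 1 ≤ Real.cosh t + Real.exp t / 2 * nsq u := by
      have := Real.one_le_cosh t
      have := mul_nonneg (half_pos (Real.exp_pos t)).le (hnsq u)
      linarith
    have hc : 0 < Real.exp t / 2 := by positivity
    simp only [height_eq n (by omega), nsq_embU_add_embW n d hdn, mul_add, ← add_assoc]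
    by_contra hne
    refine not_integrableOn_prof_mul_kernel n d hn p hp0 hpd _ hη
      (integrableOn_kernel_of_integrable_horo d hd1 (prof n p) _ _ hc ?_)
    refine (lintegral_ofReal_ne_top_iff_integrable ?_ ?_).1 hne
    · refine Measurable.aestronglyMeasurable ((measurable_prof n p).comp ?_)
      unfold nsq
      fun_prop
    · refine ae_of_all _ fun w => prof_nonneg n p _ ?_
      have := mul_nonneg hc.le (hnsq w)
      linarith
end
end
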